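/- Let α > 0 and σ > 0, and define R(t) = (σ²/(2α)) (1 − e^{−2αt}) for t > 0 and p : (0,∞) × ℝ → ℝ by p(t,x) = (2π R(t))^{-1/2} · exp( − x² / (2 R(t)) ). Then for every t > 0 and x ∈ ℝ, ∂_t p(t,x) = (σ²/2) e^{−2αt} · ∂²_x p(t,x). -/

import Mathlib

/- STATEMENT 13 (Example 5, equation (44)): FPK equation for the centered
Ornstein-Uhlenbeck process, with variance function R(t) = (σ²/(2α))(1 - e^(-2αt)). -/
theorem fpk_ou_time_dependent_form (α σ : ℝ) (hα : 0 < α) (hσ : 0 < σ)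
    (R : ℝ → ℝ)
    (hR : ∀ t : ℝ, 0 < t → R t = σ ^ 2 / (2 * α) * (1 - Real.exp (-(2 * α * t))))
    (p : ℝ → ℝ → ℝ)
    (hp : ∀ t : ℝ, 0 < t → ∀ x : ℝ,
      p t x = (2 * Real.pi * R t) ^ (-(1 / 2) : ℝ) *
        Real.exp (-x ^ 2 / (2 * R t)))
    (t : ℝ) (ht : 0 < t) (x : ℝ) :
    deriv (fun s => p s x) t =
      σ ^ 2 / 2 * Real.exp (-(2 * α * t)) * iteratedDeriv 2 (fun y => p t y) x := by
  have hRpos : 0 < R t := by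
    rw [hR t ht]
    have : Real.exp (-(2 * α * t)) < 1 := by
      rw [Real.exp_lt_one_iff]
      have : 0 < 2 * α * t := by positivity
      linarith
    have h2 : 0 < 1 - Real.exp (-(2 * α * t)) := by linarith
    positivity
  have hRd : HasDerivAt R (σ ^ 2 * Real.exp (-(2 * α * t))) t := by
    have h1 : HasDerivAt (fun s : ℝ => -(2 * α * s)) (-(2 * α * 1)) t :=
      ((hasDerivAt_id' t).const_mul (2 * α)).neg
    have h2 := ((h1.exp).const_sub 1).const_mul (σ ^ 2 / (2 * α))
    have h3 := h2.congr_of_eventuallyEq (f₁ := R)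
      ((eventually_gt_nhds ht).mono (fun s hs => hR s hs))
    refine h3.congr_deriv ?_
    field_simp
  have hpi := Real.pi_pos
  have hne : 2 * Real.pi * R t ≠ 0 := by positivity
  have hpow : (2 * Real.pi * R t) ^ (-(1 / 2) - 1 : ℝ)
      = (2 * Real.pi * R t) ^ (-(1 / 2) : ℝ) / (2 * Real.pi * R t) := by
    rw [Real.rpow_sub_one hne]
  have hT : HasDerivAt (fun s => p s x)
      (σ ^ 2 * Real.exp (-(2 * α * t)) * (x ^ 2 / (2 * R t ^ 2) - 1 / (2 * R t)) *
        ((2 * Real.pi * R t) ^ (-(1 / 2) : ℝ) * Real.exp (-x ^ 2 / (2 * R t)))) t := by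
    have h1 := (hRd.const_mul (2 * Real.pi)).rpow_const (p := (-(1 / 2) : ℝ)) (Or.inl hne)
    have h2 := ((hasDerivAt_const t (-x ^ 2)).div (hRd.const_mul 2) (by positivity)).exp
    have h3 := (h1.mul h2).congr_of_eventuallyEq (f₁ := fun s => p s x)
      ((eventually_gt_nhds ht).mono (fun s hs => hp s hs x))
    refine h3.congr_deriv ?_
    simp only [Pi.div_apply]
    rw [hpow]
    generalize (2 * Real.pi * R t) ^ (-(1 / 2) : ℝ) = A
    generalize Real.exp (-x ^ 2 / (2 * R t)) = B
    generalize Real.exp (-(2 * α * t)) = C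
    field_simp
    ring
  have hpt : (fun y => p t y) = fun y => (2 * Real.pi * R t) ^ (-(1 / 2) : ℝ) *
        Real.exp (-y ^ 2 / (2 * R t)) := funext (hp t ht)
  have hE : ∀ y : ℝ, HasDerivAt (fun y : ℝ => Real.exp (-y ^ 2 / (2 * R t)))
      (-(y / R t) * Real.exp (-y ^ 2 / (2 * R t))) y := by
    intro y
    have h1 := (((hasDerivAt_id' y).pow 2).neg.div_const (2 * R t)).exp
    refine h1.congr_deriv ?_
    simp only [Pi.neg_apply, Pi.pow_apply]
    generalize Real.exp (-y ^ 2 / (2 * R t)) = B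
    field_simp
    norm_num
  have hX1 : deriv (fun y => p t y) = fun y => (2 * Real.pi * R t) ^ (-(1 / 2) : ℝ) *
      (-(y / R t) * Real.exp (-y ^ 2 / (2 * R t))) := by
    rw [hpt]
    exact funext fun y => ((hE y).const_mul _).deriv
  rw [hT.deriv, iteratedDeriv_succ, iteratedDeriv_one, hX1]
  have h4 := ((((hasDerivAt_id' x).div_const (R t)).neg.mul (hE x)).const_mul
    ((2 * Real.pi * R t) ^ (-(1 / 2) : ℝ))).deriv
  refine Eq.trans ?_ (congrArg _ h4.symm)
  simp only [Pi.neg_apply]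
  generalize (2 * Real.pi * R t) ^ (-(1 / 2) : ℝ) = A
  generalize Real.exp (-x ^ 2 / (2 * R t)) = B
  generalize Real.exp (-(2 * α * t)) = C
  field_simp
  ring
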